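/- Let X = [x₁,…,x_n] ∈ ℝ^{d×n}, d ≥ K ≥ 1, and let {(U^k, S^k)} be generated by the non-greedy algorithm: S^k = sgn(XᵀU^k) entrywise and U^{k+1} a U-factor of a polar decomposition of XS^k, with initializer satisfying F(U⁰,S⁰) = ⟨XᵀU⁰, S⁰⟩ > 0. If there exist two indices k′ < k″ such that U^{k′} = U^{k″}, then U^{k′+1} is a FOC point: there exists S* with S*_{ij} = sgn(x_iᵀu_j^{k′+1}) whenever x_iᵀu_j^{k′+1} ≠ 0 and S*_{ij} ∈ [−1,1] otherwise, such that U^{k′+1} is a U-factor of a polar decomposition of XS*. -/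

import Mathlib

/-!
The objective values `F(Uᵏ, Sᵏ) = ‖XᵀUᵏ‖₁` are nondecreasing, through
`F(Uᵏ, Sᵏ) ≤ F(Uᵏ⁺¹, Sᵏ) ≤ F(Uᵏ⁺¹, Sᵏ⁺¹)`: a U-factor of `C` maximizes `⟨·, C⟩` over the Stiefel
manifold (`frobInner_le_of_isUFactor`), and the sign matrix of `V` maximizes `⟨V, ·⟩` over matrices
with entries in `[-1, 1]` (`frobInner_le_sgnMatrix`). A repeated iterate forces equality throughout
the cycle. In particular `Sᵏ′` also maximizes `⟨XᵀUᵏ′⁺¹, ·⟩`, which forces its entries to be the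
signs of `XᵀUᵏ′⁺¹` wherever that matrix is nonzero (`isSignSubgrad_of_frobInner_eq`). Since `Uᵏ′⁺¹`
is a U-factor of `X Sᵏ′` by construction, `S* = Sᵏ′` witnesses the first-order condition.
-/

open Matrix

noncomputable section

/-- The Stiefel manifold St(m,n): real m×n matrices with orthonormal columns. -/
def Stiefel (m n : ℕ) : Set (Matrix (Fin m) (Fin n) ℝ) := {U | Uᵀ * U = 1}

/-- Frobenius inner product ⟨A,B⟩ = trace(AᵀB). -/
def frobInner {m n : ℕ} (A B : Matrix (Fin m) (Fin n) ℝ) : ℝ := (Aᵀ * B).trace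

/-- Frobenius norm. -/
def frobNorm {m n : ℕ} (A : Matrix (Fin m) (Fin n) ℝ) : ℝ := Real.sqrt (frobInner A A)

/-- Entrywise L1 norm of a matrix. -/
def entryL1 {m n : ℕ} (A : Matrix (Fin m) (Fin n) ℝ) : ℝ := ∑ i, ∑ j, |A i j|

/-- Entrywise sign of a matrix. -/
def sgnMatrix {m n : ℕ} (A : Matrix (Fin m) (Fin n) ℝ) : Matrix (Fin m) (Fin n) ℝ :=
  Matrix.of fun i j => Real.sign (A i j)

/-- `U` is a U-factor of a polar decomposition of `C`: U ∈ St(m,n) and C = U*H with H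
symmetric positive semidefinite. -/
def IsUFactor {m n : ℕ} (U C : Matrix (Fin m) (Fin n) ℝ) : Prop :=
  U ∈ Stiefel m n ∧ ∃ H : Matrix (Fin n) (Fin n) ℝ, H.PosSemidef ∧ C = U * H

/-- `S` is an entrywise subgradient sign matrix for `V`: S_ij = sgn(V_ij) whenever
V_ij ≠ 0 and S_ij ∈ [-1,1] otherwise. -/
def IsSignSubgrad {m n : ℕ} (S V : Matrix (Fin m) (Fin n) ℝ) : Prop :=
  ∀ i j, (V i j ≠ 0 → S i j = Real.sign (V i j)) ∧ S i j ∈ Set.Icc (-1 : ℝ) 1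

lemma frobInner_eq_sum {m n : ℕ} (A B : Matrix (Fin m) (Fin n) ℝ) :
    frobInner A B = ∑ j, ∑ i, A i j * B i j := by
  simp [frobInner, Matrix.trace, Matrix.mul_apply]

lemma frobInner_transpose_mul {d n K : ℕ} (X : Matrix (Fin d) (Fin n) ℝ)
    (U : Matrix (Fin d) (Fin K) ℝ) (S : Matrix (Fin n) (Fin K) ℝ) :
    frobInner (Xᵀ * U) S = frobInner U (X * S) := by
  simp [frobInner, Matrix.transpose_mul, Matrix.mul_assoc]

lemma sign_mem_Icc (x : ℝ) : Real.sign x ∈ Set.Icc (-1 : ℝ) 1 := by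
  rcases Real.sign_apply_eq x with h | h | h <;> rw [h] <;> norm_num

lemma mul_le_mul_sign {v s : ℝ} (hs : s ∈ Set.Icc (-1 : ℝ) 1) : v * s ≤ v * Real.sign v := by
  obtain ⟨h1, h2⟩ := hs
  rcases lt_trichotomy v 0 with h | h | h
  · rw [Real.sign_of_neg h]; nlinarith
  · simp [h]
  · rw [Real.sign_of_pos h]; nlinarith

lemma frobInner_le_sgnMatrix {m n : ℕ} {S V : Matrix (Fin m) (Fin n) ℝ}
    (hS : ∀ i j, S i j ∈ Set.Icc (-1 : ℝ) 1) : frobInner V S ≤ frobInner V (sgnMatrix V) := by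
  rw [frobInner_eq_sum, frobInner_eq_sum]
  exact Finset.sum_le_sum fun j _ => Finset.sum_le_sum fun i _ => mul_le_mul_sign (hS i j)

/-- The equality case of `frobInner_le_sgnMatrix`: the entrywise bounds `V i j * S i j ≤ |V i j|`
are then all attained. -/
lemma isSignSubgrad_of_frobInner_eq {m n : ℕ} {S V : Matrix (Fin m) (Fin n) ℝ}
    (hS : ∀ i j, S i j ∈ Set.Icc (-1 : ℝ) 1)
    (h : frobInner V S = frobInner V (sgnMatrix V)) : IsSignSubgrad S V := by
  rw [frobInner_eq_sum, frobInner_eq_sum] at h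
  have hle : ∀ j i, V i j * S i j ≤ V i j * sgnMatrix V i j := fun j i => mul_le_mul_sign (hS i j)
  have hcol := (Finset.sum_eq_sum_iff_of_le
    fun j _ => Finset.sum_le_sum fun i _ => hle j i).1 h
  intro i j
  refine ⟨fun hne => ?_, hS i j⟩
  have hij := (Finset.sum_eq_sum_iff_of_le fun i _ => hle j i).1
    (hcol j (Finset.mem_univ j)) i (Finset.mem_univ i)
  exact mul_left_cancel₀ hne hij

/-- A U-factor of `C` maximizes `⟨·, C⟩` over the Stiefel manifold. For `C = V * H`, the gap
`⟨V, C⟩ - ⟨U, C⟩` is half the trace of the positive semidefinite matrix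
`(V - U) * H * (V - U)ᵀ`. -/
lemma frobInner_le_of_isUFactor {m n : ℕ} {U V C : Matrix (Fin m) (Fin n) ℝ}
    (hU : U ∈ Stiefel m n) (hV : IsUFactor V C) : frobInner U C ≤ frobInner V C := by
  obtain ⟨hVV, H, hH, rfl⟩ := hV
  have hVV : Vᵀ * V = 1 := hVV
  have hUU : Uᵀ * U = 1 := hU
  have hHt : Hᵀ = H := by simpa [Matrix.IsHermitian] using hH.isHermitian
  have hpos : 0 ≤ ((V - U) * H * (V - U)ᵀ).trace := by
    simpa using (hH.mul_mul_conjTranspose_same (V - U)).trace_nonneg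
  rw [Matrix.trace_mul_comm, ← Matrix.mul_assoc] at hpos
  have hexp : (V - U)ᵀ * (V - U) * H = (H + H) - (Vᵀ * U * H + Uᵀ * V * H) := by
    have : (V - U)ᵀ * (V - U) = (1 + 1) - (Vᵀ * U + Uᵀ * V) := by
      rw [Matrix.transpose_sub, Matrix.sub_mul, Matrix.mul_sub, Matrix.mul_sub, hVV, hUU]
      abel
    rw [this, Matrix.sub_mul, Matrix.add_mul, Matrix.add_mul, Matrix.one_mul]
  -- the two cross terms are transposes of each other up to cyclicity of the trace
  have hcross : (Vᵀ * U * H).trace = (Uᵀ * V * H).trace := by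
    rw [← Matrix.trace_transpose]
    simp only [Matrix.transpose_mul, Matrix.transpose_transpose, hHt]
    rw [Matrix.trace_mul_comm]
  rw [hexp, Matrix.trace_sub, Matrix.trace_add, Matrix.trace_add, hcross] at hpos
  have h1 : frobInner U (V * H) = (Uᵀ * V * H).trace := by rw [frobInner, Matrix.mul_assoc]
  have h2 : frobInner V (V * H) = H.trace := by
    rw [frobInner, ← Matrix.mul_assoc, hVV, Matrix.one_mul]
  linarith

/-- Proposition 3.10 — if the non-greedy algorithm repeats a projection
matrix (U^{k′} = U^{k″} with k′ < k″), then U^{k′+1} is a FOC point. -/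
theorem nga_repeated_iterate_gives_FOC {d n K : ℕ} (hK : 1 ≤ K) (hKd : K ≤ d)
    (X : Matrix (Fin d) (Fin n) ℝ)
    (U : ℕ → Matrix (Fin d) (Fin K) ℝ) (S : ℕ → Matrix (Fin n) (Fin K) ℝ)
    (hU0 : U 0 ∈ Stiefel d K)
    (hS : ∀ k, S k = sgnMatrix (Xᵀ * U k))
    (hU : ∀ k, IsUFactor (U (k + 1)) (X * S k))
    (hF0 : 0 < frobInner (Xᵀ * U 0) (S 0))
    (k' k'' : ℕ) (hlt : k' < k'') (hrepeat : U k' = U k'') :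
    ∃ Sstar : Matrix (Fin n) (Fin K) ℝ,
      IsSignSubgrad Sstar (Xᵀ * U (k' + 1)) ∧ IsUFactor (U (k' + 1)) (X * Sstar) := by
  have hSt : ∀ k, U k ∈ Stiefel d K := by
    rintro (_ | k)
    exacts [hU0, (hU k).1]
  have hSI : ∀ k i j, S k i j ∈ Set.Icc (-1 : ℝ) 1 := by
    intro k i j
    rw [hS k]
    exact sign_mem_Icc _
  have hstepU : ∀ k, frobInner (Xᵀ * U k) (S k) ≤ frobInner (Xᵀ * U (k + 1)) (S k) := by
    intro k
    rw [frobInner_transpose_mul, frobInner_transpose_mul]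
    exact frobInner_le_of_isUFactor (hSt k) (hU k)
  have hstepS : ∀ k,
      frobInner (Xᵀ * U (k + 1)) (S k) ≤ frobInner (Xᵀ * U (k + 1)) (S (k + 1)) := by
    intro k
    rw [hS (k + 1)]
    exact frobInner_le_sgnMatrix (hSI k)
  have hmono : Monotone fun k => frobInner (Xᵀ * U k) (S k) :=
    monotone_nat_of_le_succ fun k => (hstepU k).trans (hstepS k)
  have hcycle : frobInner (Xᵀ * U (k' + 1)) (S (k' + 1)) ≤ frobInner (Xᵀ * U k') (S k') := by
    have h := hmono (Nat.succ_le_of_lt hlt)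
    have hSS : S k'' = S k' := by rw [hS, hS, hrepeat]
    simpa only [hSS, ← hrepeat] using h
  refine ⟨S k', isSignSubgrad_of_frobInner_eq (hSI k') ?_, hU k'⟩
  rw [← hS (k' + 1)]
  exact le_antisymm (hstepS k') (hcycle.trans (hstepU k'))
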